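/- arXiv:2310.09775 — 2 statements merged into one kernel-verified Lean document; each statement's English description precedes it below -/
import Mathlib

section
/- Let N be a natural number with N ≥ 1, let p be a polynomial with complex coefficients of degree at most 2N − 2, and let r be a real number with 0 < r < 1. Then ∮_{z ∈ C(i,r)} p(z)/(1 + z²)^N dz = ∫_ℝ p(x)/(1 + x²)^N dx, the right-hand side being the Bochner integral over ℝ of the complex-valued function x ↦ p(x)/(1+x²)^N (with x coerced to ℂ). -/
open MeasureTheory Complex

/-!
Put `w = (z - a) / (z - b)`, with `a` in the upper and `b` in the lower half-plane. A polynomial of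
degree at most `m + n - 2` is a form in `z - a` and `z - b`, so
`p(z) / ((z - a) ^ m * (z - b) ^ n)` is a linear combination of the functions `w ^ k / (z - b) ^ 2`.
Since `dw/dz = (a - b) / (z - b) ^ 2`, each of these with `k ≠ -1` is the derivative of a multiple
of `w ^ (k + 1)` and integrates to zero both over the circle and over the line, whose two ends are
mapped to the same point `w = 1`. The remaining one is `1 / ((z - a) * (z - b))`, whose two
integrals are `2πi / (a - b)`: the one over the circle by Cauchy's formula, the one over the line by
means of a logarithmic primitive.
-/

open Filter Topology Bornology Polynomial
open Finset (range)
open Finset.HasAntidiagonal (antidiagonal mem_antidiagonal)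

section Homogeneous

variable {K : Type*} [Field K] {a b : K}

theorem exists_eq_sum_antidiagonal_X_sub_C_pow (hab : a ≠ b) {n : ℕ} {p : K[X]}
    (hp : p.natDegree ≤ n) :
    ∃ c : ℕ → K, p = ∑ ij ∈ antidiagonal n,
      C (c ij.1) * ((X - C a) ^ ij.1 * (X - C b) ^ ij.2) := by
  induction n generalizing p with
  | zero => exact ⟨fun _ ↦ p.coeff 0, by simpa using eq_C_of_natDegree_le_zero hp⟩
  | succ n ih =>
    set c₀ := p.eval a / (a - b) ^ (n + 1)
    set q := p - C c₀ * (X - C b) ^ (n + 1)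
    have hroot : q.IsRoot a := by
      have : (a - b) ^ (n + 1) ≠ 0 := pow_ne_zero _ (sub_ne_zero.2 hab)
      simp [q, c₀, this]
    have hdeg : q.natDegree ≤ n + 1 := by
      refine (natDegree_sub_le_of_le hp (natDegree_C_mul_le _ _)).trans (max_le le_rfl ?_)
      rw [natDegree_pow, natDegree_X_sub_C, mul_one]
    have hdeg_div : (q /ₘ (X - C a)).natDegree ≤ n := by
      rw [natDegree_divByMonic q (monic_X_sub_C a), natDegree_X_sub_C]
      omega
    obtain ⟨c, hc⟩ := ih hdeg_div
    refine ⟨fun i ↦ i.casesOn c₀ c, ?_⟩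
    calc
      p = C c₀ * (X - C b) ^ (n + 1) + (X - C a) * (q /ₘ (X - C a)) := by
        rw [mul_divByMonic_eq_iff_isRoot.2 hroot, add_sub_cancel]
      _ = _ := by
        rw [hc, Finset.Nat.sum_antidiagonal_succ, Finset.mul_sum, pow_zero, one_mul]
        congr! 2
        ring

end Homogeneous

theorem one_add_sq_eq_mul (z : ℂ) : 1 + z ^ 2 = (z - I) * (z - -I) := by
  linear_combination I_sq

section Moebius

/-- The function `w ^ k / (z - b) ^ 2` in the Möbius coordinate `w = (z - a) / (z - b)`, which up to
the factor `a - b` is the pullback of the differential form `w ^ k dw`. For `a ≠ b` and `k : ℤ` they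
span the rational functions with poles at most at `a` and `b` that are `O(z ^ (-2))` at infinity. -/
noncomputable def moebiusMode (a b : ℂ) (k : ℤ) (z : ℂ) : ℂ :=
  ((z - a) / (z - b)) ^ k / (z - b) ^ 2

variable {a b c z : ℂ} {k : ℤ} {r : ℝ}

theorem moebiusMode_neg_one (a b z : ℂ) :
    moebiusMode a b (-1) z = (z - a)⁻¹ * (z - b)⁻¹ := by
  rcases eq_or_ne (z - b) 0 with h | h
  · simp [moebiusMode, h]
  · rw [moebiusMode, zpow_neg_one]
    field_simp

theorem continuousAt_moebiusMode (hza : z ≠ a) (hzb : z ≠ b) :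
    ContinuousAt (moebiusMode a b k) z := by
  have ha := sub_ne_zero.2 hza
  have hb := sub_ne_zero.2 hzb
  unfold moebiusMode
  fun_prop (disch := simp [ha, hb])

theorem pow_mul_pow_div_eq_moebiusMode {i j m n : ℕ} (h : i + j + 2 = m + n) (hza : z ≠ a)
    (hzb : z ≠ b) :
    (z - a) ^ i * (z - b) ^ j / ((z - a) ^ m * (z - b) ^ n) = moebiusMode a b (i - m) z := by
  have ha := sub_ne_zero.2 hza
  have hb := sub_ne_zero.2 hzb
  have hpow : (z - b) ^ i * (z - b) ^ j * (z - b) ^ 2 = (z - b) ^ m * (z - b) ^ n := by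
    rw [← pow_add, ← pow_add, ← pow_add, h]
  rw [moebiusMode, zpow_sub₀ (div_ne_zero ha hb), zpow_natCast, zpow_natCast, div_pow, div_pow]
  field_simp
  linear_combination hpow

theorem exists_eval_div_eq_sum_moebiusMode (hab : a ≠ b) {l m n : ℕ} {p : ℂ[X]}
    (hp : p.natDegree ≤ l) (hl : l + 2 = m + n) :
    ∃ u : ℕ → ℂ, ∀ z, z ≠ a → z ≠ b →
      p.eval z / ((z - a) ^ m * (z - b) ^ n) =
        ∑ i ∈ range (l + 1), u i * moebiusMode a b (i - m) z := by
  obtain ⟨u, hu⟩ := exists_eq_sum_antidiagonal_X_sub_C_pow hab hp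
  refine ⟨u, fun z hza hzb ↦ ?_⟩
  rw [← Finset.Nat.sum_antidiagonal_eq_sum_range_succ_mk
    (fun ij ↦ u ij.1 * moebiusMode a b (ij.1 - m) z), hu, eval_finsetSum, Finset.sum_div]
  refine Finset.sum_congr rfl fun ij hij ↦ ?_
  have hdeg : ij.1 + ij.2 + 2 = m + n := by rw [mem_antidiagonal.1 hij, hl]
  rw [← pow_mul_pow_div_eq_moebiusMode hdeg hza hzb]
  simp only [eval_mul, eval_pow, eval_sub, eval_X, eval_C, mul_div_assoc]

theorem hasDerivAt_moebius {𝕜 : Type*} [NontriviallyNormedField 𝕜] (a : 𝕜) {b z : 𝕜}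
    (hz : z ≠ b) : HasDerivAt (fun z ↦ (z - a) / (z - b)) ((a - b) / (z - b) ^ 2) z := by
  refine (((hasDerivAt_id' z).sub_const a).div ((hasDerivAt_id' z).sub_const b)
    (sub_ne_zero.2 hz)).congr_deriv ?_
  ring

theorem hasDerivAt_moebius_zpow (hab : a ≠ b) (hk : k ≠ -1) (hza : z ≠ a) (hzb : z ≠ b) :
    HasDerivAt (fun z ↦ ((z - a) / (z - b)) ^ (k + 1) / ((k + 1) * (a - b)))
      (moebiusMode a b k z) z := by
  have ha := sub_ne_zero.2 hza
  have hb := sub_ne_zero.2 hzb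
  have hab' := sub_ne_zero.2 hab
  have hk' : (k : ℂ) + 1 ≠ 0 := by exact_mod_cast mt eq_neg_of_add_eq_zero_left hk
  have hpow := (hasDerivAt_zpow (k + 1) _ (.inl (div_ne_zero ha hb))).comp z
    (hasDerivAt_moebius a hzb)
  refine (hpow.div_const ((k + 1) * (a - b))).congr_deriv ?_
  rw [moebiusMode, add_sub_cancel_right]
  push_cast
  field_simp

section Circle

theorem circleIntegrable_moebiusMode (hr : 0 ≤ r) (ha : a ∉ Metric.sphere c r)
    (hb : b ∉ Metric.sphere c r) : CircleIntegrable (moebiusMode a b k) c r :=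
  ContinuousOn.circleIntegrable hr fun _ hz ↦ (continuousAt_moebiusMode
    (ne_of_mem_of_not_mem hz ha) (ne_of_mem_of_not_mem hz hb)).continuousWithinAt

theorem circleIntegral_inv_sub_mul_inv_sub (ha : a ∈ Metric.ball c r)
    (hb : b ∉ Metric.closedBall c r) :
    (∮ z in C(c, r), (z - a)⁻¹ * (z - b)⁻¹) = 2 * Real.pi * I / (a - b) := by
  have hd : DifferentiableOn ℂ (fun z ↦ (z - b)⁻¹) (Metric.closedBall c r) := fun z hz ↦
    ((differentiableAt_id.sub_const b).inv
      (sub_ne_zero.2 (ne_of_mem_of_not_mem hz hb))).differentiableWithinAt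
  simpa [div_eq_mul_inv] using hd.circleIntegral_sub_inv_smul ha

theorem circleIntegral_moebiusMode (ha : a ∈ Metric.ball c r) (hb : b ∉ Metric.closedBall c r) :
    (∮ z in C(c, r), moebiusMode a b k z) = if k = -1 then 2 * Real.pi * I / (a - b) else 0 := by
  split_ifs with hk
  · simp_rw [hk, moebiusMode_neg_one]
    exact circleIntegral_inv_sub_mul_inv_sub ha hb
  · have hab : a ≠ b := ne_of_mem_of_not_mem (Metric.ball_subset_closedBall ha) hb
    refine circleIntegral.integral_eq_zero_of_hasDerivWithinAt (Metric.pos_of_mem_ball ha).le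
      fun z hz ↦ (hasDerivAt_moebius_zpow hab hk ?_ ?_).hasDerivWithinAt
    · exact Metric.sphere_disjoint_ball.ne_of_mem hz ha
    · exact ne_of_mem_of_not_mem (Metric.sphere_subset_closedBall hz) hb

end Circle

section Line

theorem ofReal_ne_of_im_ne_zero (ha : a.im ≠ 0) (x : ℝ) : (x : ℂ) ≠ a := by
  rintro rfl
  exact ha (ofReal_im x)

theorem ne_of_im_pos_of_im_neg (ha : 0 < a.im) (hb : b.im < 0) : a ≠ b := by
  rintro rfl
  exact ha.not_gt hb

theorem tendsto_sub_div_sub_cobounded {𝕜 : Type*} [NormedField 𝕜] (a b : 𝕜) :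
    Tendsto (fun z ↦ (z - a) / (z - b)) (cobounded 𝕜) (𝓝 1) := by
  have hinv : Tendsto (fun z ↦ 1 + (b - a) * (z - b)⁻¹) (cobounded 𝕜) (𝓝 1) := by
    simpa using ((tendsto_inv₀_cobounded.comp (tendsto_sub_const_cobounded b)).const_mul
      (b - a)).const_add 1
  refine hinv.congr' ?_
  filter_upwards [eventually_ne_cobounded b] with z hz
  field_simp [sub_ne_zero.2 hz]
  ring

theorem tendsto_ofReal_sub_div_ofReal_sub (a b : ℂ) :
    Tendsto (fun x : ℝ ↦ ((x : ℂ) - a) / (x - b)) (cobounded ℝ) (𝓝 1) :=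
  (tendsto_sub_div_sub_cobounded a b).comp (RCLike.tendsto_ofReal_cobounded_cobounded ℂ)

theorem isBigO_moebiusMode_cobounded (a b : ℂ) (k : ℤ) :
    (fun x : ℝ ↦ moebiusMode a b k x) =O[cobounded ℝ] fun x ↦ (((1 + x ^ 2)⁻¹ : ℝ) : ℂ) := by
  -- The quotient of both sides, since `1 + x ^ 2 = (x - I) * (x - -I)`.
  have hlim : Tendsto (fun x : ℝ ↦ (((x : ℂ) - a) / (x - b)) ^ k *
      (((x - I) / (x - b)) * ((x - -I) / (x - b)))) (cobounded ℝ) (𝓝 1) := by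
    simpa using ((tendsto_ofReal_sub_div_ofReal_sub a b).zpow₀ k (.inl one_ne_zero)).mul
      ((tendsto_ofReal_sub_div_ofReal_sub I b).mul (tendsto_ofReal_sub_div_ofReal_sub (-I) b))
  refine Asymptotics.isBigO_of_div_tendsto_nhds (.of_forall fun x hx ↦ ?_) 1
    (hlim.congr fun x ↦ ?_)
  · have : 1 + x ^ 2 ≠ 0 := by positivity
    exact absurd (ofReal_eq_zero.1 hx) (inv_ne_zero this)
  · simp only [moebiusMode, Pi.div_apply, ofReal_inv, ofReal_add, ofReal_one, ofReal_pow,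
      div_inv_eq_mul, one_add_sq_eq_mul]
    rw [div_mul_div_comm, ← sq, ← mul_div_assoc, div_mul_eq_mul_div]

theorem integrable_moebiusMode (ha : a.im ≠ 0) (hb : b.im ≠ 0) :
    Integrable fun x : ℝ ↦ moebiusMode a b k x := by
  have hcont : Continuous fun x : ℝ ↦ moebiusMode a b k x :=
    continuous_iff_continuousAt.2 fun x ↦ (continuousAt_moebiusMode
      (ofReal_ne_of_im_ne_zero ha x) (ofReal_ne_of_im_ne_zero hb x)).comp
        continuous_ofReal.continuousAt
  have hbigO := isBigO_moebiusMode_cobounded a b k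
  rw [Metric.cobounded_eq_cocompact] at hbigO
  exact hcont.locallyIntegrable.integrable_of_isBigO_cocompact hbigO
    (integrable_inv_one_add_sq.ofReal.integrableAtFilter _)

theorem tendsto_log_mul_sub_log_atTop (a : ℂ) (hc : c ∈ slitPlane) :
    Tendsto (fun x : ℝ ↦ log (c * (x - a)) - Real.log x) atTop (𝓝 (log c)) := by
  have hquot : Tendsto (fun x : ℝ ↦ c * ((x - a) / x)) atTop (𝓝 c) := by
    simpa using ((tendsto_ofReal_sub_div_ofReal_sub a 0).mono_left
      IsOrderBornology.atTop_le_cobounded).const_mul c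
  refine (hquot.clog hc).congr' ?_
  filter_upwards [eventually_gt_atTop 0, hquot.eventually_ne (slitPlane_ne_zero hc)] with x hx hne
  have hx' : (x : ℂ) ≠ 0 := ofReal_ne_zero.2 hx.ne'
  rw [eq_sub_iff_add_eq', ← log_ofReal_mul hx hne]
  congr 1
  field_simp

theorem tendsto_log_mul_sub_log_mul_atTop {d : ℂ} (a b : ℂ) (hc : c ∈ slitPlane)
    (hd : d ∈ slitPlane) :
    Tendsto (fun x : ℝ ↦ log (c * (x - a)) - log (d * (x - b))) atTop (𝓝 (log c - log d)) := by
  simpa using (tendsto_log_mul_sub_log_atTop a hc).sub (tendsto_log_mul_sub_log_atTop b hd)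

theorem tendsto_log_mul_sub_log_mul_atBot {d : ℂ} (a b : ℂ) (hc : -c ∈ slitPlane)
    (hd : -d ∈ slitPlane) :
    Tendsto (fun x : ℝ ↦ log (c * (x - a)) - log (d * (x - b))) atBot
      (𝓝 (log (-c) - log (-d))) := by
  refine ((tendsto_log_mul_sub_log_mul_atTop (-a) (-b) hc hd).comp
    tendsto_neg_atBot_atTop).congr fun x ↦ ?_
  simp only [Function.comp_apply, ofReal_neg, ← neg_sub', neg_mul_neg]

theorem hasDerivAt_log_mul_sub (hz : c * (z - a) ∈ slitPlane) :
    HasDerivAt (fun z ↦ log (c * (z - a))) (z - a)⁻¹ z := by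
  have hc : c ≠ 0 := left_ne_zero_of_mul (slitPlane_ne_zero hz)
  refine ((((hasDerivAt_id' z).sub_const a).const_mul c).clog hz).congr_deriv ?_
  rw [mul_one, div_mul_cancel_left₀ hc]

theorem integral_inv_sub_mul_inv_sub (ha : 0 < a.im) (hb : b.im < 0) :
    ∫ x : ℝ, ((x : ℂ) - a)⁻¹ * (x - b)⁻¹ = 2 * Real.pi * I / (a - b) := by
  have hab : a - b ≠ 0 := sub_ne_zero.2 (ne_of_im_pos_of_im_neg ha hb)
  -- The factors `I` and `-I` rotate `x - a` and `x - b` into the right half-plane, so that the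
  -- branch cut is avoided also in the limits `x → ±∞`.
  have hderiv (x : ℝ) : HasDerivAt
      (fun x : ℝ ↦ (log (I * (x - a)) - log (-I * (x - b))) / (a - b))
      (((x : ℂ) - a)⁻¹ * (x - b)⁻¹) x := by
    have hxa : I * (x - a) ∈ slitPlane := .inl (by simpa using ha)
    have hxb : -I * (x - b) ∈ slitPlane := .inl (by simpa using hb)
    refine (((hasDerivAt_log_mul_sub hxa).sub
      (hasDerivAt_log_mul_sub hxb)).div_const (a - b)).comp_ofReal.congr_deriv ?_
    have hxa' := sub_ne_zero.2 (ofReal_ne_of_im_ne_zero ha.ne' x)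
    have hxb' := sub_ne_zero.2 (ofReal_ne_of_im_ne_zero hb.ne x)
    field_simp
    ring
  have hint : Integrable fun x : ℝ ↦ ((x : ℂ) - a)⁻¹ * (x - b)⁻¹ := by
    simpa only [moebiusMode_neg_one] using integrable_moebiusMode (k := -1) ha.ne' hb.ne
  have hI : I ∈ slitPlane := .inr (by simp)
  have hnegI : -I ∈ slitPlane := .inr (by simp)
  rw [integral_of_hasDerivAt_of_tendsto hderiv hint
    ((tendsto_log_mul_sub_log_mul_atBot a b hnegI ((neg_neg I).symm ▸ hI)).div_const (a - b))
    ((tendsto_log_mul_sub_log_mul_atTop a b hI hnegI).div_const (a - b)),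
    neg_neg, log_I, log_neg_I]
  ring

theorem integral_moebiusMode (ha : 0 < a.im) (hb : b.im < 0) :
    ∫ x : ℝ, moebiusMode a b k x = if k = -1 then 2 * Real.pi * I / (a - b) else 0 := by
  split_ifs with hk
  · simp_rw [hk, moebiusMode_neg_one]
    exact integral_inv_sub_mul_inv_sub ha hb
  · have hab : a ≠ b := ne_of_im_pos_of_im_neg ha hb
    have hderiv (x : ℝ) := (hasDerivAt_moebius_zpow hab hk (ofReal_ne_of_im_ne_zero ha.ne' x)
      (ofReal_ne_of_im_ne_zero hb.ne x)).comp_ofReal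
    have hlim := ((tendsto_ofReal_sub_div_ofReal_sub a b).zpow₀ (k + 1)
      (.inl one_ne_zero)).div_const ((k + 1) * (a - b))
    rw [integral_of_hasDerivAt_of_tendsto hderiv (integrable_moebiusMode ha.ne' hb.ne)
      (hlim.mono_left IsOrderBornology.atBot_le_cobounded)
      (hlim.mono_left IsOrderBornology.atTop_le_cobounded), sub_self]

end Line

end Moebius

theorem neg_I_notMem_closedBall {r : ℝ} (hr : r < 2) : -I ∉ Metric.closedBall I r := by
  have hdist : dist (-I) I = 2 := by rw [dist_eq, ← neg_add', ← two_mul, norm_neg]; simp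
  rw [Metric.mem_closedBall, hdist]
  exact hr.not_ge

theorem stmt15_general {a b c : ℂ} {r : ℝ} {m n : ℕ} {p : ℂ[X]} (hp : p.natDegree + 2 ≤ m + n)
    (ha : 0 < a.im) (hb : b.im < 0) (har : a ∈ Metric.ball c r) (hbr : b ∉ Metric.closedBall c r) :
    (∮ z in C(c, r), p.eval z / ((z - a) ^ m * (z - b) ^ n)) =
      ∫ x : ℝ, p.eval (x : ℂ) / ((x - a) ^ m * (x - b) ^ n) := by
  have hab : a ≠ b := ne_of_im_pos_of_im_neg ha hb
  have hr : 0 ≤ r := (Metric.pos_of_mem_ball har).le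
  have has : a ∉ Metric.sphere c r := Metric.sphere_disjoint_ball.notMem_of_mem_right har
  have hbs : b ∉ Metric.sphere c r := fun h ↦ hbr (Metric.sphere_subset_closedBall h)
  obtain ⟨l, hl⟩ : ∃ l, l + 2 = m + n := ⟨m + n - 2, by omega⟩
  obtain ⟨u, hu⟩ := exists_eval_div_eq_sum_moebiusMode hab (show p.natDegree ≤ l by omega) hl
  calc
    _ = ∮ z in C(c, r), ∑ i ∈ range (l + 1), u i * moebiusMode a b (i - m) z :=
      circleIntegral.integral_congr hr fun z hz ↦
        hu z (ne_of_mem_of_not_mem hz has) (ne_of_mem_of_not_mem hz hbs)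
    _ = ∑ i ∈ range (l + 1), u i * ∮ z in C(c, r), moebiusMode a b (i - m) z := by
      have hint (i : ℕ) : CircleIntegrable (fun z ↦ u i * moebiusMode a b (i - m) z) c r :=
        (circleIntegrable_moebiusMode hr has hbs).const_fun_smul
      rw [circleIntegral.integral_fun_sum fun i _ ↦ hint i]
      simp_rw [circleIntegral.integral_const_mul]
    _ = ∑ i ∈ range (l + 1), u i * ∫ x : ℝ, moebiusMode a b (i - m) x := by
      simp_rw [circleIntegral_moebiusMode har hbr, integral_moebiusMode ha hb]
    _ = ∫ x : ℝ, ∑ i ∈ range (l + 1), u i * moebiusMode a b (i - m) x := by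
      rw [integral_finsetSum _ fun i _ ↦ (integrable_moebiusMode ha.ne' hb.ne).const_mul (u i)]
      simp_rw [integral_const_mul]
    _ = _ := by
      congr! with x
      exact (hu x (ofReal_ne_of_im_ne_zero ha.ne' x) (ofReal_ne_of_im_ne_zero hb.ne x)).symm

theorem stmt15 (N : ℕ) (hN : 1 ≤ N) (p : Polynomial ℂ) (hp : p.natDegree ≤ 2 * N - 2)
    (r : ℝ) (hr0 : 0 < r) (hr1 : r < 1) :
    (∮ z in C(I, r), p.eval z / (1 + z ^ 2) ^ N) =
      ∫ x : ℝ, p.eval (x : ℂ) / (1 + (x : ℂ) ^ 2) ^ N := by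
  simp_rw [one_add_sq_eq_mul, mul_pow]
  exact stmt15_general (by omega) (by simp) (by simp) (Metric.mem_ball_self hr0)
    (neg_I_notMem_closedBall (by linarith))
end

section
/- Let V be a finite-dimensional real vector space of dimension n and let Q be a quadratic form on V, with Clifford algebra Cl(Q) and canonical linear embedding ι : V → Cl(Q). For all u, v ∈ V, the trace of the ℝ-linear endomorphism x ↦ ι(u)·ι(v)·x of Cl(Q) (left multiplication by ι(u)·ι(v)) equals (2^n / 2)·polar_Q(u,v), where polar_Q(u,v) = Q(u+v) − Q(u) − Q(v). -/
/-!
The trace of left multiplication is cyclic, so `ι u * ι v` and `ι v * ι u` have the same trace,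
and their sum is the scalar `polar Q u v`. Twice the trace is therefore `polar Q u v` times the
rank of the Clifford algebra. On a free module every quadratic form comes from a bilinear form,
even where `2` is not invertible, so this rank is that of the exterior algebra.
-/

open Module

section Trace

variable {R A : Type*} [CommRing R] [Ring A] [Algebra R A]

theorem trace_mulLeft_mul_comm (a b : A) :
    LinearMap.trace R A (LinearMap.mulLeft R (a * b)) =
      LinearMap.trace R A (LinearMap.mulLeft R (b * a)) := by
  rw [LinearMap.mulLeft_mul, LinearMap.mulLeft_mul]
  exact LinearMap.trace_mul_comm R _ _

theorem trace_mulLeft_add (a b : A) :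
    LinearMap.trace R A (LinearMap.mulLeft R (a + b)) =
      LinearMap.trace R A (LinearMap.mulLeft R a) + LinearMap.trace R A (LinearMap.mulLeft R b) :=
  map_add (LinearMap.trace R A ∘ₗ LinearMap.mul R A) a b

theorem trace_mulLeft_algebraMap [Module.Free R A] [Module.Finite R A] (r : R) :
    LinearMap.trace R A (LinearMap.mulLeft R (algebraMap R A r)) = r * finrank R A := by
  have mulLeft_eq : LinearMap.mulLeft R (algebraMap R A r) = r • (1 : A →ₗ[R] A) :=
    LinearMap.ext fun x ↦ (Algebra.smul_def r x).symm
  rw [mulLeft_eq, map_smul, LinearMap.trace_one, smul_eq_mul]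

end Trace

section CliffordAlgebra

variable {R M : Type*} [CommRing R] [AddCommGroup M] [Module R M]

theorem nonempty_cliffordAlgebra_linearEquiv_exteriorAlgebra [Module.Free R M]
    (Q : QuadraticForm R M) : Nonempty (CliffordAlgebra Q ≃ₗ[R] ExteriorAlgebra R M) := by
  obtain ⟨B, hB⟩ := LinearMap.BilinMap.toQuadraticMap_surjective (-Q)
  exact ⟨CliffordAlgebra.changeFormEquiv (B := B) (by rw [hB, zero_sub])⟩

theorem nonempty_basis_cliffordAlgebra {I : Type*} (b : Basis I R M) (Q : QuadraticForm R M) :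
    Nonempty (Basis (Finset I) R (CliffordAlgebra Q)) := by
  let _ : LinearOrder I := IsWellOrder.linearOrder WellOrderingRel
  have : Module.Free R M := .of_basis b
  obtain ⟨e⟩ := nonempty_cliffordAlgebra_linearEquiv_exteriorAlgebra Q
  exact ⟨b.ExteriorAlgebra.map e.symm⟩

instance free_cliffordAlgebra [Module.Free R M] (Q : QuadraticForm R M) :
    Module.Free R (CliffordAlgebra Q) :=
  let ⟨b⟩ := nonempty_basis_cliffordAlgebra (Free.chooseBasis R M) Q
  .of_basis b

instance finite_cliffordAlgebra [Module.Free R M] [Module.Finite R M] (Q : QuadraticForm R M) :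
    Module.Finite R (CliffordAlgebra Q) :=
  let ⟨b⟩ := nonempty_basis_cliffordAlgebra (Free.chooseBasis R M) Q
  .of_basis b

theorem finrank_cliffordAlgebra [Nontrivial R] [Module.Free R M] [Module.Finite R M]
    (Q : QuadraticForm R M) : finrank R (CliffordAlgebra Q) = 2 ^ finrank R M := by
  obtain ⟨b⟩ := nonempty_basis_cliffordAlgebra (Free.chooseBasis R M) Q
  rw [finrank_eq_card_basis b, Fintype.card_finset, finrank_eq_card_chooseBasisIndex]

theorem stmt17_general [Module.Free R M] [Module.Finite R M] (Q : QuadraticForm R M) (u v : M) :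
    2 * LinearMap.trace R (CliffordAlgebra Q)
        (LinearMap.mulLeft R (CliffordAlgebra.ι Q u * CliffordAlgebra.ι Q v)) =
      2 ^ finrank R M * QuadraticMap.polar Q u v := by
  nontriviality R
  set a := CliffordAlgebra.ι Q u
  set b := CliffordAlgebra.ι Q v
  calc 2 * LinearMap.trace R _ (LinearMap.mulLeft R (a * b))
    _ = LinearMap.trace R _ (LinearMap.mulLeft R (a * b + b * a)) := by
      rw [trace_mulLeft_add, trace_mulLeft_mul_comm b a, two_mul]
    _ = LinearMap.trace R _ (LinearMap.mulLeft R (algebraMap R _ (QuadraticMap.polar Q u v))) := by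
      rw [CliffordAlgebra.ι_mul_ι_add_swap]
    _ = QuadraticMap.polar Q u v * finrank R (CliffordAlgebra Q) := trace_mulLeft_algebraMap _
    _ = 2 ^ finrank R M * QuadraticMap.polar Q u v := by
      rw [finrank_cliffordAlgebra, Nat.cast_pow, Nat.cast_ofNat, mul_comm]

end CliffordAlgebra

theorem stmt17 (V : Type*) [AddCommGroup V] [Module ℝ V] [FiniteDimensional ℝ V]
    (n : ℕ) (hn : Module.finrank ℝ V = n) (Q : QuadraticForm ℝ V) (u v : V) :
    LinearMap.trace ℝ (CliffordAlgebra Q)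
        (LinearMap.mulLeft ℝ (CliffordAlgebra.ι Q u * CliffordAlgebra.ι Q v)) =
      (2 ^ n / 2 : ℝ) * QuadraticMap.polar Q u v := by
  subst hn
  linarith [stmt17_general Q u v]
end
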